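/- arXiv:2311.06387 — 3 statements merged into one kernel-verified Lean document; each statement's English description precedes it below -/
import Mathlib

section
/- Let P ⊆ Φ_{B_n} be a signed poset. The root cone K^rt_P is full-dimensional (its ℝ-linear span is all of ℝ^n) if and only if there is no nonzero vector ε ∈ {−1,0,1}^n with ⟨ε, α⟩ = 0 for all α ∈ P. Equivalently, K^rt_P is full-dimensional if and only if the weight cone K^wt_P is pointed, i.e., there is no nonzero f ∈ ℝ^n with both f and −f in K^wt_P; in particular, when K^rt_P is not full-dimensional there is a nonzero ε ∈ {−1,0,1}^n such that ⟨ε, α⟩ ≥ 0 and ⟨−ε, α⟩ ≥ 0 for all α ∈ P (i.e., both ε and −ε are ideal vectors of P). -/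
open scoped Classical

noncomputable section

/-- Signed index set `±[n]`: `(true, i)` represents `+i`, `(false, i)` represents `-i`. -/
abbrev SIdx (n : ℕ) := Bool × Fin n

/-- Negation `a ↦ -a` on `±[n]`. -/
def negS {n : ℕ} (a : SIdx n) : SIdx n := (!a.1, a.2)

/-- Standard basis vector `e_i` of `ℝ^n`. -/
def stdB (n : ℕ) (i : Fin n) : Fin n → ℝ := Pi.single i 1

/-- `rsgn true = 1`, `rsgn false = -1`. -/
def rsgn (s : Bool) : ℝ := if s then 1 else -1

/-- `v(a)` for `a ∈ ±[n]`: `v(+i) = e_i`, `v(-i) = -e_i`. -/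
def vS {n : ℕ} (a : SIdx n) : Fin n → ℝ := rsgn a.1 • stdB n a.2

/-- `v` on `±[n] ∪ {0}` (with `none` playing the role of `0`). -/
def vO {n : ℕ} : Option (SIdx n) → (Fin n → ℝ)
  | none => 0
  | some a => vS a

/-- Negation on `±[n] ∪ {0}`, fixing `0`. -/
def negO {n : ℕ} : Option (SIdx n) → Option (SIdx n)
  | none => none
  | some a => some (negS a)

/-- Standard inner product on `ℝ^n`. -/
def dotR {n : ℕ} (x y : Fin n → ℝ) : ℝ := ∑ i, x i * y i

/-- The type `B_n` root system `Φ_{B_n}`. -/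
def BnRoots (n : ℕ) : Set (Fin n → ℝ) :=
  {α | (∃ i j : Fin n, i < j ∧ ∃ s t : Bool, α = rsgn s • stdB n i + rsgn t • stdB n j) ∨
    ∃ i : Fin n, ∃ s : Bool, α = rsgn s • stdB n i}

/-- The positive roots `Φ⁺_{B_n}`. -/
def BnPos (n : ℕ) : Set (Fin n → ℝ) :=
  {α | (∃ i j : Fin n, i < j ∧ ∃ t : Bool, α = stdB n i + rsgn t • stdB n j) ∨
    ∃ i : Fin n, α = stdB n i}

/-- The type `C_n` root system `Φ_{C_n}`. -/
def CnRoots (n : ℕ) : Set (Fin n → ℝ) :=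
  {α | (∃ i j : Fin n, i < j ∧ ∃ s t : Bool, α = rsgn s • stdB n i + rsgn t • stdB n j) ∨
    ∃ i : Fin n, ∃ s : Bool, α = (2 * rsgn s) • stdB n i}

/-- Nonnegative real linear combinations of elements of `S`. -/
def nnSpan {n : ℕ} (S : Set (Fin n → ℝ)) : Set (Fin n → ℝ) :=
  {x | ∃ (r : ℕ) (c : Fin r → ℝ) (β : Fin r → (Fin n → ℝ)),
    (∀ m, 0 ≤ c m) ∧ (∀ m, β m ∈ S) ∧ x = ∑ m, c m • β m}

/-- A signed poset: a subset of `Φ_{B_n}`, antisymmetric and closed under positive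
linear combinations remaining in `Φ_{B_n}`. -/
def IsSignedPoset (n : ℕ) (P : Set (Fin n → ℝ)) : Prop :=
  P ⊆ BnRoots n ∧ (∀ α ∈ P, -α ∉ P) ∧ ∀ α ∈ BnRoots n, α ∈ nnSpan P → α ∈ P

/-- A `C_n`-signed poset. -/
def IsCnSignedPoset (n : ℕ) (Q : Set (Fin n → ℝ)) : Prop :=
  Q ⊆ CnRoots n ∧ (∀ α ∈ Q, -α ∉ Q) ∧ ∀ α ∈ CnRoots n, α ∈ nnSpan Q → α ∈ Q

/-- The root cone `K^rt_P`. -/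
def rootCone {n : ℕ} (P : Set (Fin n → ℝ)) : Set (Fin n → ℝ) := nnSpan P

/-- The weight cone `K^wt_P`. -/
def weightCone {n : ℕ} (P : Set (Fin n → ℝ)) : Set (Fin n → ℝ) :=
  {f | ∀ α ∈ P, 0 ≤ dotR f α}

/-- The Fischer (strict) order on `±[n] ∪ {0}`:
`a < b` iff `v(a) - v(b) ∈ P`, or (`b = -a ≠ 0` and `v(a) ∈ P`). -/
def fLT {n : ℕ} (P : Set (Fin n → ℝ)) (a b : Option (SIdx n)) : Prop :=
  vO a - vO b ∈ P ∨ (a ≠ none ∧ b = negO a ∧ vO a ∈ P)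

/-- A subset of `±[n]` is isotropic if it contains no pair `{i, -i}`. -/
def Isotropic {n : ℕ} (J : Finset (SIdx n)) : Prop :=
  ∀ i : Fin n, ¬((true, i) ∈ J ∧ (false, i) ∈ J)

/-- Signed characteristic vector of a subset of `±[n]`. -/
def chiF {n : ℕ} (J : Finset (SIdx n)) : Fin n → ℝ := fun i =>
  if (true, i) ∈ J then 1 else if (false, i) ∈ J then -1 else 0

/-- `J` is an ideal of the signed poset `P`. -/
def IsIdeal {n : ℕ} (P : Set (Fin n → ℝ)) (J : Finset (SIdx n)) : Prop :=
  Isotropic J ∧ ∀ α ∈ P, 0 ≤ dotR (chiF J) α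

/-- Comparability in the Fischer order of `P`. -/
def fComp {n : ℕ} (P : Set (Fin n → ℝ)) (a b : SIdx n) : Prop :=
  fLT P (some a) (some b) ∨ fLT P (some b) (some a)

/-- One step in the comparability graph on a subset `J` of `±[n]`. -/
def connStep {n : ℕ} (P : Set (Fin n → ℝ)) (J : Finset (SIdx n)) (a b : SIdx n) : Prop :=
  a ∈ J ∧ b ∈ J ∧ fComp P a b

/-- `J` is connected: nonempty, and any two of its elements are joined by a path inside `J`
in the comparability graph of the Fischer order of `P`. -/
def IsConnectedIdl {n : ℕ} (P : Set (Fin n → ℝ)) (J : Finset (SIdx n)) : Prop :=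
  J.Nonempty ∧ ∀ a ∈ J, ∀ b ∈ J, Relation.ReflTransGen (connStep P J) a b

/-- A connected ideal of `P`. -/
def IsConnIdeal {n : ℕ} (P : Set (Fin n → ℝ)) (J : Finset (SIdx n)) : Prop :=
  IsIdeal P J ∧ IsConnectedIdl P J

/-- Support `supp J = {|a| : a ∈ J}`. -/
def suppF {n : ℕ} (J : Finset (SIdx n)) : Finset (Fin n) := J.image Prod.snd

/-- `J` and `K` intersect nontrivially. -/
def NontrivInter {n : ℕ} (J K : Finset (SIdx n)) : Prop :=
  (suppF J ∩ suppF K).Nonempty ∧ ¬J ⊆ K ∧ ¬K ⊆ J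

/-- `J` and `K` intersect trivially. -/
def TrivInter {n : ℕ} (J K : Finset (SIdx n)) : Prop := ¬NontrivInter J K

/-- A signed permutation, as an anti-symmetric bijection of `±[n]`. -/
def IsSPerm {n : ℕ} (w : SIdx n ≃ SIdx n) : Prop := ∀ a, w (negS a) = negS (w a)

/-- Linear action of a signed permutation on `ℝ^n`, determined by `w(e_i) = v(w(+i))`. -/
def spAct {n : ℕ} (w : SIdx n ≃ SIdx n) (x : Fin n → ℝ) : Fin n → ℝ :=
  ∑ i, x i • vS (w (true, i))

/-- `w` is a linear extension of `P`: a signed permutation with `P ⊆ w(Φ⁺_{B_n})`. -/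
def IsLinExt {n : ℕ} (P : Set (Fin n → ℝ)) (w : SIdx n ≃ SIdx n) : Prop :=
  IsSPerm w ∧ ∀ α ∈ P, ∃ β ∈ BnPos n, α = spAct w β

/-- The (finite) set `𝓛(P)` of linear extensions of `P`. -/
def linExts (n : ℕ) (P : Set (Fin n → ℝ)) : Finset (SIdx n ≃ SIdx n) :=
  Finset.univ.filter (IsLinExt P)

/-- Simple roots of `Φ_{B_n}`: `α_i = e_i - e_{i+1}` for `i < n - 1`, `α_{n-1} = e_{n-1}`
(0-indexed). -/
def simpleRoot (n : ℕ) (i : Fin n) : Fin n → ℝ := fun j =>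
  (if j = i then (1 : ℝ) else 0) - if (j : ℕ) = (i : ℕ) + 1 then 1 else 0

/-- `J^w_m = {w(1), …, w(m)}` (0-indexed: the images under `w` of `+1, …, +(m+1)`). -/
def JwSet {n : ℕ} (w : SIdx n ≃ SIdx n) (m : Fin n) : Finset (SIdx n) :=
  (Finset.univ.filter (fun j : Fin n => j ≤ m)).image (fun j => w (true, j))

/-- An extensible ideal of `P`. -/
def Extensible (n : ℕ) (P : Set (Fin n → ℝ)) (J : Finset (SIdx n)) : Prop :=
  ∃ I : Finset (SIdx n), I.Nonempty ∧ Disjoint I J ∧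
    IsIdeal P (J ∪ I) ∧ IsIdeal P (J ∪ I.image negS)

/-- The finite set `J_conn(P)` of connected ideals of `P`. -/
def JconnF (n : ℕ) (P : Set (Fin n → ℝ)) : Finset (Finset (SIdx n)) :=
  Finset.univ.filter (IsConnIdeal P)

/-- Membership in `Π(P)`: an unordered pair of nontrivially intersecting connected ideals. -/
def inPiP {n : ℕ} (P : Set (Fin n → ℝ)) (p : Sym2 (Finset (SIdx n))) : Prop :=
  ∃ J K : Finset (SIdx n),
    p = s(J, K) ∧ IsConnIdeal P J ∧ IsConnIdeal P K ∧ NontrivInter J K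

/-- The finite set `Π(P)` of unordered pairs of nontrivially intersecting connected ideals. -/
def PiP (n : ℕ) (P : Set (Fin n → ℝ)) : Finset (Sym2 (Finset (SIdx n))) :=
  Finset.univ.filter (inPiP P)

/-- No connected ideal of `P` intersects two or more other connected ideals nontrivially. -/
def NoDoubleNontriv (n : ℕ) (P : Set (Fin n → ℝ)) : Prop :=
  ∀ J K K' : Finset (SIdx n), IsConnIdeal P J → IsConnIdeal P K → IsConnIdeal P K' →
    NontrivInter J K → NontrivInter J K' → K = K'

/-- The connected component of `a` inside `J` (w.r.t. the Fischer comparability graph). -/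
def componentIn {n : ℕ} (P : Set (Fin n → ℝ)) (J : Finset (SIdx n)) (a : SIdx n) :
    Finset (SIdx n) :=
  J.filter (fun b => Relation.ReflTransGen (connStep P J) a b)

/-- The set of connected components of `J`. -/
def componentsOf {n : ℕ} (P : Set (Fin n → ℝ)) (J : Finset (SIdx n)) :
    Finset (Finset (SIdx n)) :=
  J.image (componentIn P J)

/-- The signed support `supp±(f) = {sgn(f_i)·i : f_i ≠ 0}` of a vector `f ∈ ℝ^n`. -/
def suppPM {n : ℕ} (f : Fin n → ℝ) : Finset (SIdx n) :=
  Finset.univ.filter (fun a : SIdx n => if a.1 then 0 < f a.2 else f a.2 < 0)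

/-- Index type for the variables `U_J`, `J` a connected ideal of `P`. -/
abbrev ConnIdx (n : ℕ) (P : Set (Fin n → ℝ)) := {J : Finset (SIdx n) // IsConnIdeal P J}

/-- Integer signed characteristic vector, as an exponent vector for Laurent monomials. -/
def chiZ {n : ℕ} (J : Finset (SIdx n)) : Fin n →₀ ℤ :=
  Finsupp.equivFunOnFinite.symm (fun i =>
    if (true, i) ∈ J then 1 else if (false, i) ∈ J then -1 else 0)

/-- The map `φ : k[U_J : J ∈ J_conn(P)] → k[x_1^{±1}, …, x_n^{±1}]`, `U_J ↦ x^{χ_J}`. -/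
def phiWt (n : ℕ) (P : Set (Fin n → ℝ)) (k : Type) [Field k] :
    MvPolynomial (ConnIdx n P) k →ₐ[k] AddMonoidAlgebra k (Fin n →₀ ℤ) :=
  MvPolynomial.aeval (fun J => AddMonoidAlgebra.single (chiZ J.val) 1)

/-- The binomial `syz(U_J, U_K) = U_J U_K - (∏_A U_A) (∏_B U_B)`, where `A` runs over the
connected components of `J ∩ K` and `B` over the connected components of `supp±(χ_J + χ_K)`. -/
def syzPoly (n : ℕ) (P : Set (Fin n → ℝ)) (k : Type) [Field k] (J K : ConnIdx n P) :
    MvPolynomial (ConnIdx n P) k :=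
  MvPolynomial.X J * MvPolynomial.X K -
    (∏ A ∈ Finset.univ.filter
        (fun A : ConnIdx n P => (A : Finset (SIdx n)) ∈ componentsOf P (J.val ∩ K.val)),
        MvPolynomial.X A) *
      ∏ B ∈ Finset.univ.filter
        (fun B : ConnIdx n P =>
          (B : Finset (SIdx n)) ∈ componentsOf P (suppPM (chiF J.val + chiF K.val))),
        MvPolynomial.X B

/-- `θ_1, …, θ_r` is a regular sequence: the ideal it generates is proper, and each `θ_{m+1}`
is a non-zero-divisor modulo the ideal generated by `θ_1, …, θ_m`. -/
def IsRegSeq {R : Type} [CommRing R] {r : ℕ} (θ : Fin r → R) : Prop :=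
  Ideal.span (Set.range θ) ≠ ⊤ ∧
    ∀ (m : ℕ) (hm : m < r) (x : R),
      θ ⟨m, hm⟩ * x ∈ Ideal.span (θ '' {j : Fin r | (j : ℕ) < m}) →
        x ∈ Ideal.span (θ '' {j : Fin r | (j : ℕ) < m})

/-- The induced signed poset `P_A = P ∩ span_ℝ{e_i : i ∈ A}`. -/
def inducedPoset (n : ℕ) (P : Set (Fin n → ℝ)) (A : Finset (Fin n)) : Set (Fin n → ℝ) :=
  {α | α ∈ P ∧ α ∈ Submodule.span ℝ (stdB n '' (A : Set (Fin n)))}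

/-- The major index of a signed permutation. -/
def majB {n : ℕ} (w : SIdx n ≃ SIdx n) : ℕ :=
  ∑ i ∈ Finset.univ.filter
      (fun i : Fin n => spAct w (simpleRoot n i) ∉ BnPos n), ((i : ℕ) + 1)

/-- `[m]_q = 1 + q + ⋯ + q^{m-1}` in `ℤ[q]`. -/
def qInt (m : ℕ) : Polynomial ℤ := ∑ t ∈ Finset.range m, Polynomial.X ^ t

/-- The symmetric function `{J, K} ↦ ⟨x, χ_J + χ_K⟩` on unordered pairs. -/
def pairDot {n : ℕ} (x : Fin n → ℝ) : Sym2 (Finset (SIdx n)) → ℝ :=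
  Sym2.lift ⟨fun J K => dotR x (chiF J + chiF K),
    fun J K => congrArg (dotR x) (add_comm (chiF J) (chiF K))⟩

/-- The symmetric function `{J, K} ↦ [|J| + |K|]_q` on unordered pairs. -/
def pairQ {n : ℕ} : Sym2 (Finset (SIdx n)) → Polynomial ℤ :=
  Sym2.lift ⟨fun J K => qInt (J.card + K.card),
    fun J K => congrArg qInt (Nat.add_comm J.card K.card)⟩

/-- The principal order ideal `I_≤(a)` in the Fischer order restricted to `±[n]`. -/
def Ile {n : ℕ} (P : Set (Fin n → ℝ)) (a : SIdx n) : Set (SIdx n) :=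
  {b | b = a ∨ fLT P (some b) (some a)}

/-- A set of signed indices is isotropic if it contains no pair `{i, -i}`. -/
def IsoSet {n : ℕ} (S : Set (SIdx n)) : Prop :=
  ∀ i : Fin n, ¬((true, i) ∈ S ∧ (false, i) ∈ S)

/-- A covering pair of the Fischer order of `P`. -/
def CovPair {n : ℕ} (P : Set (Fin n → ℝ)) (a b : Option (SIdx n)) : Prop :=
  fLT P a b ∧ ¬∃ c : Option (SIdx n), fLT P a c ∧ fLT P c b

/-- The set of covering roots of `P`. -/
def covRoots {n : ℕ} (P : Set (Fin n → ℝ)) : Set (Fin n → ℝ) :=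
  {x | ∃ a b : Option (SIdx n), CovPair P a b ∧ x = vO a - vO b}

/-- The set `J_ε = {i : ε_i = 1} ∪ {-i : ε_i = -1}` attached to a `{-1,0,1}`-vector. -/
def Jeps {n : ℕ} (ε : Fin n → ℝ) : Set (SIdx n) :=
  {a | (a.1 = true ∧ ε a.2 = 1) ∨ (a.1 = false ∧ ε a.2 = -1)}

/-!
`span P ≠ ⊤` exactly when some nonzero `f` is orthogonal to `P`. A root of type `B` has at most two
nonzero coordinates, all of absolute value `1`, so orthogonality of `f` to it says either `f i = 0`
or `f i = ± f j`. Both relations survive replacing every coordinate by its sign, and so the sign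
vector of `f` is again nonzero and orthogonal to `P`. The lineality space of the weight cone of `P`
is the orthogonal complement of `P`.
-/

open scoped Matrix
open SignType

theorem span_eq_top_iff_forall_dotProduct_eq_zero {ι K : Type*} [Fintype ι] [Field K]
    (S : Set (ι → K)) :
    Submodule.span K S = ⊤ ↔ ∀ f : ι → K, (∀ α ∈ S, f ⬝ᵥ α = 0) → f = 0 := by
  have mem_dualAnnihilator (φ : Module.Dual K (ι → K)) :
      φ ∈ (Submodule.span K S).dualAnnihilator ↔ ∀ α ∈ S, φ α = 0 :=
    Set.ext_iff.1 (Submodule.coe_dualAnnihilator_span S) φ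
  rw [← Submodule.dualAnnihilator_eq_bot_iff, Submodule.eq_bot_iff,
    (dotProductEquiv K ι).surjective.forall]
  simp only [mem_dualAnnihilator, dotProductEquiv_apply_apply, LinearEquiv.map_eq_zero_iff]

section SignVector

variable {ι K : Type*}

section Preorder

variable [Zero K] [One K] [Neg K] [Preorder K] [DecidableLT K]

/-- The vector of signs of the coordinates of `f`, with entries `-1`, `0`, `1` in `K` itself rather
than in `SignType`. -/
def signVec (f : ι → K) : ι → K := fun i => (sign (f i) : K)

theorem signVec_trichotomy (f : ι → K) (i : ι) :
    signVec f i = -1 ∨ signVec f i = 0 ∨ signVec f i = 1 := by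
  rcases (sign (f i)).trichotomy with h | h | h <;> simp [signVec, h]

end Preorder

variable [Ring K] [LinearOrder K] [IsStrictOrderedRing K]

theorem signVec_ne_zero {f : ι → K} (hf : f ≠ 0) : signVec f ≠ 0 := by
  obtain ⟨i, hi⟩ := Function.ne_iff.1 hf
  refine Function.ne_iff.2 ⟨i, fun hsign : (sign (f i) : K) = 0 => hi ?_⟩
  rw [← sign_mul_abs (f i), hsign, zero_mul, Pi.zero_apply]

theorem mul_sign_eq_abs_mul_sign (a x : K) : a * sign x = |a| * sign (a * x) := by
  rw [sign_mul, coe_mul, ← mul_assoc, abs_mul_sign]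

theorem mul_sign_add_mul_sign_eq_zero {a b x y : K} (hab : |a| = |b|) (h : a * x + b * y = 0) :
    a * sign x + b * sign y = 0 := by
  rw [mul_sign_eq_abs_mul_sign, mul_sign_eq_abs_mul_sign b, eq_neg_of_add_eq_zero_left h,
    Left.sign_neg, coe_neg, hab, mul_neg, neg_add_cancel]

end SignVector

section BnRoots

variable {n : ℕ}

theorem abs_rsgn (s : Bool) : |rsgn s| = 1 := by
  cases s <;> simp [rsgn]

theorem dotR_eq_dotProduct (f g : Fin n → ℝ) : dotR f g = f ⬝ᵥ g := rfl

theorem dotR_rsgn_smul_stdB (f : Fin n → ℝ) (s : Bool) (i : Fin n) :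
    dotR f (rsgn s • stdB n i) = rsgn s * f i := by
  simp [dotR_eq_dotProduct, stdB]

theorem dotR_add (f x y : Fin n → ℝ) : dotR f (x + y) = dotR f x + dotR f y :=
  dotProduct_add f x y

theorem dotR_neg_left (f α : Fin n → ℝ) : dotR (-f) α = -dotR f α :=
  neg_dotProduct f α

theorem dotR_signVec_eq_zero {f α : Fin n → ℝ} (hα : α ∈ BnRoots n) (h : dotR f α = 0) :
    dotR (signVec f) α = 0 := by
  obtain ⟨i, j, -, s, t, rfl⟩ | ⟨i, s, rfl⟩ := hα
  · rw [dotR_add, dotR_rsgn_smul_stdB, dotR_rsgn_smul_stdB] at h ⊢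
    exact mul_sign_add_mul_sign_eq_zero ((abs_rsgn s).trans (abs_rsgn t).symm) h
  · rw [dotR_rsgn_smul_stdB] at h ⊢
    rw [signVec, mul_sign_eq_abs_mul_sign, h, sign_zero, coe_zero, mul_zero]

end BnRoots

section Cones

variable {n : ℕ} (P : Set (Fin n → ℝ))

theorem subset_rootCone : P ⊆ rootCone P := fun α hα =>
  ⟨1, fun _ => 1, fun _ => α, fun _ => zero_le_one, fun _ => hα, by simp⟩

theorem rootCone_subset_span : rootCone P ⊆ Submodule.span ℝ P := by
  rintro _ ⟨r, c, β, -, hβ, rfl⟩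
  exact Submodule.sum_smul_mem _ c fun m _ => Submodule.subset_span (hβ m)

theorem span_rootCone : Submodule.span ℝ (rootCone P) = Submodule.span ℝ P :=
  Submodule.span_eq_span (rootCone_subset_span P)
    ((subset_rootCone P).trans Submodule.subset_span)

theorem span_rootCone_eq_top_iff :
    Submodule.span ℝ (rootCone P) = ⊤ ↔
      ∀ f : Fin n → ℝ, (∀ α ∈ P, dotR f α = 0) → f = 0 := by
  rw [span_rootCone]
  exact span_eq_top_iff_forall_dotProduct_eq_zero P

variable {P}

theorem mem_weightCone_and_neg_mem_iff {f : Fin n → ℝ} :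
    f ∈ weightCone P ∧ -f ∈ weightCone P ↔ ∀ α ∈ P, dotR f α = 0 := by
  simp only [weightCone, Set.mem_ofPred_eq, dotR_neg_left, Left.nonneg_neg_iff, ← forall₂_and,
    and_comm, ← le_antisymm_iff]

theorem exists_sign_vector_orthogonal_of_span_rootCone_ne_top (hP : P ⊆ BnRoots n)
    (hspan : Submodule.span ℝ (rootCone P) ≠ ⊤) :
    ∃ ε : Fin n → ℝ, ε ≠ 0 ∧ (∀ i, ε i = -1 ∨ ε i = 0 ∨ ε i = 1) ∧ ∀ α ∈ P, dotR ε α = 0 := by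
  rw [Ne, span_rootCone_eq_top_iff] at hspan
  push Not at hspan
  obtain ⟨f, hfP, hf⟩ := hspan
  exact ⟨signVec f, signVec_ne_zero hf, signVec_trichotomy f,
    fun α hα => dotR_signVec_eq_zero (hP hα) (hfP α hα)⟩

end Cones

theorem statement_7_general {n : ℕ} {P : Set (Fin n → ℝ)} (hP : P ⊆ BnRoots n) :
    (Submodule.span ℝ (rootCone P) = ⊤ ↔
      ¬∃ ε : Fin n → ℝ, ε ≠ 0 ∧ (∀ i, ε i = -1 ∨ ε i = 0 ∨ ε i = 1) ∧
        ∀ α ∈ P, dotR ε α = 0) ∧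
    (Submodule.span ℝ (rootCone P) = ⊤ ↔
      ∀ f : Fin n → ℝ, f ∈ weightCone P → -f ∈ weightCone P → f = 0) ∧
    (Submodule.span ℝ (rootCone P) ≠ ⊤ →
      ∃ ε : Fin n → ℝ, ε ≠ 0 ∧ (∀ i, ε i = -1 ∨ ε i = 0 ∨ ε i = 1) ∧
        ε ∈ weightCone P ∧ -ε ∈ weightCone P) := by
  have exists_sign := exists_sign_vector_orthogonal_of_span_rootCone_ne_top hP
  refine ⟨⟨?_, fun hε => by_contra fun hspan => hε (exists_sign hspan)⟩, ?_, ?_⟩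
  · rintro hspan ⟨ε, hε, -, hεP⟩
    exact hε ((span_rootCone_eq_top_iff P).1 hspan ε hεP)
  · simp only [span_rootCone_eq_top_iff, ← mem_weightCone_and_neg_mem_iff, and_imp]
  · simpa only [mem_weightCone_and_neg_mem_iff] using exists_sign

theorem statement_7 (n : ℕ) (hn : 1 ≤ n) (P : Set (Fin n → ℝ)) (hP : IsSignedPoset n P) :
    (Submodule.span ℝ (rootCone P) = ⊤ ↔
      ¬∃ ε : Fin n → ℝ, ε ≠ 0 ∧ (∀ i, ε i = -1 ∨ ε i = 0 ∨ ε i = 1) ∧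
        ∀ α ∈ P, dotR ε α = 0) ∧
    (Submodule.span ℝ (rootCone P) = ⊤ ↔
      ∀ f : Fin n → ℝ, f ∈ weightCone P → -f ∈ weightCone P → f = 0) ∧
    (Submodule.span ℝ (rootCone P) ≠ ⊤ →
      ∃ ε : Fin n → ℝ, ε ≠ 0 ∧ (∀ i, ε i = -1 ∨ ε i = 0 ∨ ε i = 1) ∧
        ε ∈ weightCone P ∧ -ε ∈ weightCone P) := by
  exact statement_7_general hP.1
end
end

section
/- Let P ⊆ Φ_{B_n} be a signed poset with Fischer order < on ±[n] ∪ {0}, and let a ∈ ±[n]. Write I_≤(a) = {b ∈ ±[n] : b = a or b < a}. Then at least one of the two sets I_≤(a) and I_≤(−a) is isotropic, that is, contains no pair {i, −i} with i ∈ {1,…,n}. -/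
open scoped Classical

noncomputable section

/-!
If `b` and `-b` both lie in `I_≤(a)`, then `v(b) - v(a)` and `v(-b) - v(a)` lie in the cone spanned
by `P`, and so does half their sum, which is `-v(a)`. Since `-v(a)` is a root, it lies in `P`. Hence
if neither `I_≤(a)` nor `I_≤(-a)` is isotropic, then both `-v(a)` and `v(a)` lie in `P`, against
antisymmetry.
-/

section

variable {n : ℕ} {P : Set (Fin n → ℝ)} {a b : SIdx n}

theorem nnSpan_eq_hull (S : Set (Fin n → ℝ)) : nnSpan S = PointedCone.hull ℝ S := by
  ext x
  rw [SetLike.mem_coe, PointedCone.hull, Submodule.mem_span_set']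
  constructor
  · rintro ⟨r, c, β, hc, hβ, rfl⟩
    exact ⟨r, fun m => ⟨c m, hc m⟩, fun m => ⟨β m, hβ m⟩, rfl⟩
  · rintro ⟨r, c, β, rfl⟩
    exact ⟨r, fun m => c m, fun m => β m, fun m => (c m).2, fun m => (β m).2, rfl⟩

theorem IsSignedPoset.mem_of_mem_hull (hP : IsSignedPoset n P) {α : Fin n → ℝ}
    (hroot : α ∈ BnRoots n) (hcone : α ∈ PointedCone.hull ℝ P) : α ∈ P :=
  hP.2.2 α hroot (nnSpan_eq_hull P ▸ hcone)

theorem vS_mem_BnRoots (a : SIdx n) : vS a ∈ BnRoots n :=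
  Or.inr ⟨a.2, a.1, rfl⟩

theorem vS_negS (a : SIdx n) : vS (negS a) = -vS a := by
  rcases a with ⟨_ | _, i⟩ <;> simp [vS, negS, rsgn]

theorem isoSet_iff_forall_negS_notMem {S : Set (SIdx n)} : IsoSet S ↔ ∀ b ∈ S, negS b ∉ S := by
  simp only [IsoSet, negS, Prod.forall, Bool.forall_bool, Bool.not_false, Bool.not_true]
  grind

theorem negS_mem_Ile (h : vS (negS a) ∈ P) : negS a ∈ Ile P a :=
  Or.inr (Or.inr ⟨Option.some_ne_none _, by simp [negO, negS], h⟩)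

theorem vS_sub_vS_mem_hull_of_mem_Ile (h : b ∈ Ile P a) : vS b - vS a ∈ PointedCone.hull ℝ P := by
  rcases h with rfl | hsub | ⟨-, hneg, hb⟩
  · rw [sub_self]
    exact zero_mem _
  · exact PointedCone.subset_hull hsub
  · obtain rfl : a = negS b := Option.some.inj hneg
    rw [vS_negS, sub_neg_eq_add]
    have hb' : vS b ∈ PointedCone.hull ℝ P := PointedCone.subset_hull hb
    exact add_mem hb' hb'

theorem vS_negS_mem_hull_of_mem_Ile (hb : b ∈ Ile P a) (hnb : negS b ∈ Ile P a) :
    vS (negS a) ∈ PointedCone.hull ℝ P := by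
  have hsum := add_mem (vS_sub_vS_mem_hull_of_mem_Ile hb) (vS_sub_vS_mem_hull_of_mem_Ile hnb)
  have heq : vS (negS a) = (1 / 2 : ℝ) • (vS b - vS a + (vS (negS b) - vS a)) := by
    rw [vS_negS, vS_negS]
    module
  rw [heq]
  exact PointedCone.smul_mem _ (by norm_num) hsum

theorem IsSignedPoset.isoSet_Ile_iff (hP : IsSignedPoset n P) :
    IsoSet (Ile P a) ↔ vS (negS a) ∉ P := by
  rw [isoSet_iff_forall_negS_notMem]
  constructor
  · intro hiso hneg
    exact hiso a (Or.inl rfl) (negS_mem_Ile hneg)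
  · intro hneg b hb hnb
    exact hneg (hP.mem_of_mem_hull (vS_mem_BnRoots _) (vS_negS_mem_hull_of_mem_Ile hb hnb))

end

theorem statement_8 (n : ℕ) (hn : 1 ≤ n) (P : Set (Fin n → ℝ)) (hP : IsSignedPoset n P)
    (a : SIdx n) :
    IsoSet (Ile P a) ∨ IsoSet (Ile P (negS a)) := by
  rw [hP.isoSet_Ile_iff, hP.isoSet_Ile_iff, ← not_and_or]
  rintro ⟨hneg, hnegneg⟩
  rw [vS_negS (negS a)] at hnegneg
  exact hP.2.1 _ hneg hnegneg
end
end

section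
/- Let P ⊆ Φ_{B_n} be a signed poset. Call a pair a ⋖ b of elements of ±[n] ∪ {0} a covering pair of the Fischer order if a < b and there is no c ∈ ±[n] ∪ {0} with a < c < b, and call v(a) − v(b) the corresponding covering root; every covering root lies in P. Then every element of P is a sum with nonnegative integer coefficients of covering roots; consequently the additive submonoid of ℤ^n generated by P coincides with the additive submonoid generated by the covering roots. Moreover this generating set is minimal: no covering root is a sum with nonnegative integer coefficients of the other covering roots. -/
open scoped Classical

noncomputable section

/-!
In terms of the cone spanned by `P`, the Fischer order reads `a < b` iff `a ≠ b` and `v(a) - v(b)`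
lies in the cone. Hence it is a strict order on a finite set, and telescoping `v` along a saturated
chain writes each element of `P` as a sum of covering roots.

For minimality, suppose that `ρ = v(a) - v(b)` is a sum of other covering roots. As `⟨ρ, ρ⟩ > 0`,
some summand `β` has `⟨ρ, β⟩ > 0`, which forces `β = v(a) - v(x)` or `β = v(x) - v(b)` for some `x`.
Since `β ≠ ρ` and both `β` and `ρ - β` lie in the cone, `a < x < b`, contradicting that `b`
covers `a`.
-/

theorem transGen_cover_of_rel {α : Type*} [Finite α] {r : α → α → Prop}
    [IsStrictOrder α r] {a b : α} (h : r a b) :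
    Relation.TransGen (fun x y ↦ r x y ∧ ¬∃ z, r x z ∧ r z y) a b := by
  let := Fintype.ofFinite α
  let := partialOrderOfSO r
  let : LocallyFiniteOrder α := Fintype.toLocallyFiniteOrder
  have hcov : Relation.TransGen (· ⋖ ·) a b := transGen_covBy_of_lt h
  exact Relation.TransGen.mono
    (fun _ _ hxy ↦ ⟨hxy.1, fun ⟨_, hxz, hzy⟩ ↦ hxy.2 hxz hzy⟩) a b hcov

theorem sub_mem_of_transGen {ι M σ : Type*} [AddGroup M] [SetLike σ M] [AddMemClass σ M]
    {N : σ} {f : ι → M} {r : ι → ι → Prop} (hr : ∀ x y, r x y → f x - f y ∈ N) {a b : ι}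
    (h : Relation.TransGen r a b) : f a - f b ∈ N := by
  induction h with
  | single hab => exact hr _ _ hab
  | tail _ hbc ih => simpa only [sub_add_sub_cancel] using add_mem ih (hr _ _ hbc)

theorem exists_mem_pos_sub_mem_closure {M R : Type*} [AddCommGroup M] [AddCommMonoid R]
    [LinearOrder R] [IsOrderedAddMonoid R] (f : M →+ R) {S : Set M} {x : M}
    (hx : x ∈ AddSubmonoid.closure S) (hfx : 0 < f x) :
    ∃ β ∈ S, 0 < f β ∧ x - β ∈ AddSubmonoid.closure S := by
  induction hx using AddSubmonoid.closure_induction with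
  | mem x hx => exact ⟨x, hx, hfx, by simp only [sub_self, zero_mem]⟩
  | zero => exact absurd hfx (by simp only [map_zero, lt_self_iff_false, not_false_eq_true])
  | add x y hx hy ihx ihy =>
    have hpos : 0 < f x ∨ 0 < f y :=
      lt_or_lt_of_add_lt_add (by rwa [add_zero, ← map_add])
    rcases hpos with hpos | hpos
    · obtain ⟨β, hβ, hfβ, hrest⟩ := ihx hpos
      exact ⟨β, hβ, hfβ, by simpa only [sub_add_eq_add_sub] using add_mem hrest hy⟩
    · obtain ⟨β, hβ, hfβ, hrest⟩ := ihy hpos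
      exact ⟨β, hβ, hfβ, by simpa only [add_sub_assoc] using add_mem hx hrest⟩

section FischerOrder

open scoped Matrix NNReal

variable {n : ℕ} {P S : Set (Fin n → ℝ)} {a b c d : Option (SIdx n)} {α β : Fin n → ℝ}

theorem mem_nnSpan_iff : α ∈ nnSpan S ↔ α ∈ Submodule.span ℝ≥0 S := by
  rw [Submodule.mem_span_set']
  constructor
  · rintro ⟨r, c, β, hc, hβ, rfl⟩
    exact ⟨r, fun m ↦ ⟨c m, hc m⟩, fun m ↦ ⟨β m, hβ m⟩, rfl⟩
  · rintro ⟨r, c, β, rfl⟩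
    exact ⟨r, fun m ↦ c m, fun m ↦ β m, fun m ↦ (c m).2, fun m ↦ (β m).2, rfl⟩

theorem rsgn_not (s : Bool) : rsgn (!s) = -rsgn s := by
  cases s <;> simp [rsgn]

theorem vO_none : vO (none : Option (SIdx n)) = 0 := rfl

theorem vO_some (s : Bool) (i : Fin n) : vO (some (s, i)) = Pi.single i (rsgn s) := by
  simp [vO, vS, stdB, ← Pi.single_smul']

theorem vO_negO (a : Option (SIdx n)) : vO (negO a) = -vO a := by
  rcases a with _ | ⟨s, i⟩
  · simp [vO, negO]
  · simp [vO, negO, vS, negS, rsgn_not]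

theorem negO_negO (a : Option (SIdx n)) : negO (negO a) = a := by
  rcases a with _ | ⟨s, i⟩ <;> simp [negO, negS]

theorem negO_eq_self_iff : negO a = a ↔ a = none := by
  rcases a with _ | ⟨s, i⟩ <;> simp [negO, negS]

theorem sub_mem_BnRoots (hne : a ≠ b) (hneg : b ≠ negO a) : vO a - vO b ∈ BnRoots n := by
  rcases a with _ | ⟨s, i⟩ <;> rcases b with _ | ⟨t, j⟩
  · exact absurd rfl hne
  · exact Or.inr ⟨j, !t, by simp [vO, vS, rsgn_not]⟩
  · exact Or.inr ⟨i, s, by simp [vO, vS]⟩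
  · rcases lt_trichotomy i j with hij | rfl | hij
    · exact Or.inl ⟨i, j, hij, s, !t, by simp [vO, vS, rsgn_not, sub_eq_add_neg]⟩
    · cases s <;> cases t <;> simp [negO, negS] at hne hneg
    · exact Or.inl ⟨j, i, hij, !t, s, by simp [vO, vS, rsgn_not, sub_eq_add_neg, add_comm]⟩

theorem vO_mem_BnRoots (ha : a ≠ none) : vO a ∈ BnRoots n := by
  obtain ⟨⟨s, i⟩, rfl⟩ := Option.ne_none_iff_exists'.1 ha
  exact Or.inr ⟨i, s, rfl⟩

theorem exists_eq_sub_of_mem_BnRoots (hα : α ∈ BnRoots n) :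
    ∃ a b : Option (SIdx n), α = vO a - vO b := by
  rcases hα with ⟨i, j, _, s, t, rfl⟩ | ⟨i, s, rfl⟩
  · exact ⟨some (s, i), some (!t, j), by simp [vO, vS, rsgn_not]⟩
  · exact ⟨some (s, i), none, by simp [vO, vS]⟩

theorem neg_mem_BnRoots (hα : α ∈ BnRoots n) : -α ∈ BnRoots n := by
  rcases hα with ⟨i, j, hij, s, t, rfl⟩ | ⟨i, s, rfl⟩
  · exact Or.inl ⟨i, j, hij, !s, !t, by simp only [rsgn_not]; module⟩
  · exact Or.inr ⟨i, !s, by simp only [rsgn_not]; module⟩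

theorem half_smul_sub_negO (a : Option (SIdx n)) :
    (1 / 2 : ℝ≥0) • (vO a - vO (negO a)) = vO a := by
  rw [vO_negO, NNReal.smul_def]
  push_cast
  module

-- `v(a) - v(-a) = 2 v(a)` is twice a root; every other nonzero difference is itself a root.
theorem exists_smul_sub_mem_BnRoots (hne : a ≠ b) : ∃ t : ℝ≥0, t • (vO a - vO b) ∈ BnRoots n := by
  by_cases hneg : b = negO a
  · subst hneg
    have ha : a ≠ none := negO_eq_self_iff.not.1 hne.symm
    exact ⟨1 / 2, by simpa only [half_smul_sub_negO] using vO_mem_BnRoots ha⟩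
  · exact ⟨1, by simpa only [one_smul] using sub_mem_BnRoots hne hneg⟩

theorem eq_of_vO_dotProduct_pos (h : 0 < vO a ⬝ᵥ vO b) : a = b := by
  rcases a with _ | ⟨s, i⟩ <;> rcases b with _ | ⟨t, j⟩
  · rfl
  · simp [vO] at h
  · simp [vO] at h
  · rw [vO_some, vO_some, single_dotProduct] at h
    obtain rfl : i = j := by
      by_contra hij
      simp [hij] at h
    cases s <;> cases t <;> simp [rsgn] at h ⊢ <;> linarith

theorem exists_eq_sub_of_dotProduct_pos (h : 0 < (vO a - vO b) ⬝ᵥ (vO c - vO d)) :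
    ∃ x, vO c - vO d = vO a - vO x ∨ vO c - vO d = vO x - vO b := by
  have hexpand : (vO a - vO b) ⬝ᵥ (vO c - vO d) =
      vO a ⬝ᵥ vO c + vO a ⬝ᵥ vO (negO d) + vO (negO b) ⬝ᵥ vO c + vO b ⬝ᵥ vO d := by
    simp only [vO_negO, sub_dotProduct, dotProduct_sub, neg_dotProduct, dotProduct_neg]
    ring
  have hswap : vO c - vO d = vO (negO d) - vO (negO c) := by
    rw [vO_negO, vO_negO, neg_sub_neg]
  by_cases hac : 0 < vO a ⬝ᵥ vO c
  · exact ⟨d, Or.inl (by rw [eq_of_vO_dotProduct_pos hac])⟩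
  by_cases had : 0 < vO a ⬝ᵥ vO (negO d)
  · exact ⟨negO c, Or.inl (by rw [eq_of_vO_dotProduct_pos had, hswap])⟩
  by_cases hbc : 0 < vO (negO b) ⬝ᵥ vO c
  · exact ⟨negO d, Or.inr (by rw [hswap, ← eq_of_vO_dotProduct_pos hbc, negO_negO])⟩
  have hbd : 0 < vO b ⬝ᵥ vO d := by linarith
  exact ⟨c, Or.inr (by rw [eq_of_vO_dotProduct_pos hbd])⟩

namespace IsSignedPoset

theorem mem_of_mem_span (hP : IsSignedPoset n P) (hroot : α ∈ BnRoots n)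
    (hα : α ∈ Submodule.span ℝ≥0 P) : α ∈ P :=
  hP.2.2 α hroot (mem_nnSpan_iff.2 hα)

theorem zero_notMem (hP : IsSignedPoset n P) : 0 ∉ P := fun h ↦
  hP.2.1 0 h (by rwa [neg_zero])

theorem fLT_iff (hP : IsSignedPoset n P) :
    fLT P a b ↔ a ≠ b ∧ vO a - vO b ∈ Submodule.span ℝ≥0 P := by
  constructor
  · rintro (h | ⟨ha, rfl, h⟩)
    · refine ⟨?_, Submodule.subset_span h⟩
      rintro rfl
      exact hP.zero_notMem (by rwa [sub_self] at h)
    · refine ⟨fun haa ↦ ha (negO_eq_self_iff.1 haa.symm), ?_⟩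
      rw [vO_negO, sub_neg_eq_add]
      exact add_mem (Submodule.subset_span h) (Submodule.subset_span h)
  · rintro ⟨hne, h⟩
    by_cases hneg : b = negO a
    · subst hneg
      have ha : a ≠ none := negO_eq_self_iff.not.1 hne.symm
      have hhalf := Submodule.smul_mem _ (1 / 2 : ℝ≥0) h
      rw [half_smul_sub_negO] at hhalf
      exact Or.inr ⟨ha, rfl, hP.mem_of_mem_span (vO_mem_BnRoots ha) hhalf⟩
    · exact Or.inl (hP.mem_of_mem_span (sub_mem_BnRoots hne hneg) h)

theorem fLT_asymm (hP : IsSignedPoset n P) (hab : fLT P a b) : ¬fLT P b a := by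
  intro hba
  obtain ⟨hne, hab⟩ := hP.fLT_iff.1 hab
  obtain ⟨-, hba⟩ := hP.fLT_iff.1 hba
  obtain ⟨t, hroot⟩ := exists_smul_sub_mem_BnRoots hne
  refine hP.2.1 _ (hP.mem_of_mem_span hroot (Submodule.smul_mem _ t hab)) ?_
  refine hP.mem_of_mem_span (neg_mem_BnRoots hroot) ?_
  rw [← smul_neg, neg_sub]
  exact Submodule.smul_mem _ t hba

theorem fLT_trans (hP : IsSignedPoset n P) (hab : fLT P a b) (hbc : fLT P b c) : fLT P a c := by
  refine hP.fLT_iff.2 ⟨?_, ?_⟩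
  · rintro rfl
    exact hP.fLT_asymm hab hbc
  · rw [← sub_add_sub_cancel (vO a) (vO b) (vO c)]
    exact add_mem (hP.fLT_iff.1 hab).2 (hP.fLT_iff.1 hbc).2

theorem isStrictOrder_fLT (hP : IsSignedPoset n P) : IsStrictOrder (Option (SIdx n)) (fLT P) where
  irrefl _ h := hP.fLT_asymm h h
  trans _ _ _ := hP.fLT_trans

theorem mem_closure_covRoots (hP : IsSignedPoset n P) (hα : α ∈ P) :
    α ∈ AddSubmonoid.closure (covRoots P) := by
  obtain ⟨a, b, rfl⟩ := exists_eq_sub_of_mem_BnRoots (hP.1 hα)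
  have := hP.isStrictOrder_fLT
  have hchain : Relation.TransGen (CovPair P) a b := transGen_cover_of_rel (Or.inl hα)
  have hcov : ∀ x y, CovPair P x y → vO x - vO y ∈ AddSubmonoid.closure (covRoots P) :=
    fun x y hxy ↦ AddSubmonoid.subset_closure ⟨x, y, hxy, rfl⟩
  exact sub_mem_of_transGen hcov hchain

end IsSignedPoset

theorem CovPair.sub_mem (h : CovPair P a b) : vO a - vO b ∈ P := by
  rcases h.1 with hsub | ⟨-, rfl, ha⟩
  · exact hsub
  · -- `a < 0 < -a`, so `a` is not covered by `-a`.
    have h0 : fLT P a none ∧ fLT P none (negO a) :=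
      ⟨Or.inl (by rwa [vO_none, sub_zero]), Or.inl (by rwa [vO_negO, vO_none, zero_sub, neg_neg])⟩
    exact absurd ⟨none, h0⟩ h.2

theorem covRoots_subset : covRoots P ⊆ P := by
  rintro _ ⟨a, b, h, rfl⟩
  exact h.sub_mem

theorem CovPair.eq_of_dotProduct_pos (hP : IsSignedPoset n P) (hab : CovPair P a b) (hβ : β ∈ P)
    (hpos : 0 < (vO a - vO b) ⬝ᵥ β) (hrest : vO a - vO b - β ∈ Submodule.span ℝ≥0 P) :
    β = vO a - vO b := by
  by_contra hne
  obtain ⟨c, d, rfl⟩ := exists_eq_sub_of_mem_BnRoots (hP.1 hβ)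
  obtain ⟨x, hx | hx⟩ := exists_eq_sub_of_dotProduct_pos hpos <;> rw [hx] at hβ hne hrest
  · rw [sub_sub_sub_cancel_left] at hrest
    exact hab.2 ⟨x, Or.inl hβ, hP.fLT_iff.2 ⟨by rintro rfl; exact hne rfl, hrest⟩⟩
  · rw [sub_sub_sub_cancel_right] at hrest
    exact hab.2 ⟨x, hP.fLT_iff.2 ⟨by rintro rfl; exact hne rfl, hrest⟩, Or.inl hβ⟩

theorem CovPair.notMem_closure_diff (hP : IsSignedPoset n P) (hab : CovPair P a b) :
    vO a - vO b ∉ AddSubmonoid.closure (covRoots P \ {vO a - vO b}) := by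
  intro hmem
  have hne : vO a - vO b ≠ 0 := fun h ↦ hP.zero_notMem (h ▸ hab.sub_mem)
  have hself : 0 < (vO a - vO b) ⬝ᵥ (vO a - vO b) := by
    simpa only [star_trivial] using Matrix.dotProduct_star_self_pos_iff.2 hne
  obtain ⟨β, ⟨hβ, hβne⟩, hpos, hrest⟩ := exists_mem_pos_sub_mem_closure
    (dotProductBilin ℝ ℝ (vO a - vO b)).toAddMonoidHom hmem hself
  have hsubset : covRoots P \ {vO a - vO b} ⊆ P := Set.sdiff_subset.trans covRoots_subset
  exact hβne (hab.eq_of_dotProduct_pos hP (covRoots_subset hβ) hpos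
    (Submodule.closure_subset_span (AddSubmonoid.closure_mono hsubset hrest)))

end FischerOrder

theorem statement_10 (n : ℕ) (hn : 1 ≤ n) (P : Set (Fin n → ℝ)) (hP : IsSignedPoset n P) :
    (∀ a b : Option (SIdx n), CovPair P a b → vO a - vO b ∈ P) ∧
    (∀ α ∈ P, α ∈ AddSubmonoid.closure (covRoots P)) ∧
    AddSubmonoid.closure P = AddSubmonoid.closure (covRoots P) ∧
    ∀ a b : Option (SIdx n), CovPair P a b →
      vO a - vO b ∉ AddSubmonoid.closure (covRoots P \ {vO a - vO b}) := by
  refine ⟨fun _ _ h ↦ h.sub_mem, fun _ h ↦ hP.mem_closure_covRoots h, ?_,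
    fun _ _ h ↦ h.notMem_closure_diff hP⟩
  exact le_antisymm (AddSubmonoid.closure_le.2 fun _ h ↦ hP.mem_closure_covRoots h)
    (AddSubmonoid.closure_mono covRoots_subset)
end
end
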